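/- For each n ∈ {30, 31, 32}, there exists an infinite word x over an alphabet of n letters such that every factor of x having period q has length at most n·q/(n−1); that is, x contains no factor of exponent strictly greater than n/(n−1), so the repetitive threshold satisfies RT(n) ≤ n/(n−1) (Dejean's conjecture for n = 30, 31, 32). -/

import Mathlib

/-- The four-letter alphabet `A₄ = {1,2,3,4}`; the value `k : Fin 4` represents letter `k+1`. -/
abbrev A4 := Fin 4

/-- The morphism `f` on letters: `f(1)=121, f(2)=123, f(3)=141, f(4)=142`
(letters `1,2,3,4` encoded as `0,1,2,3`). -/
def fm : A4 → List A4
  | 0 => [0, 1, 0]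
  | 1 => [0, 1, 2]
  | 2 => [0, 3, 0]
  | 3 => [0, 3, 1]

/-- The morphism `f` extended to words by concatenation. -/
def fw (u : List A4) : List A4 := u.flatMap fm

/-- The fixed point `w` of `f` starting with the letter `1`: since `|f^k(1)| = 3^k` and each
`f^k(1)` is a prefix of `f^(k+1)(1)`, the `n`-th letter of `w` is the `n`-th letter of
`f^(n+1)(1)`. -/
def w (n : ℕ) : A4 := ((fw^[n + 1]) [0]).getD n 0

/-- The finite word `t` occurs at position `i` in the infinite word `x`. -/
def OccursAt {α : Type*} (t : List α) (x : ℕ → α) (i : ℕ) : Prop :=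
  t = (List.range t.length).map fun k => x (i + k)

/-- The finite word `v` is a factor of the infinite word `x`. -/
def FactorOf {α : Type*} (v : List α) (x : ℕ → α) : Prop :=
  ∃ i, OccursAt v x i

/-- The finite word `v` has period `q ≥ 1`: `v(j) = v(j+q)` whenever `0 ≤ j < |v| - q`. -/
def HasPeriod {α : Type*} (v : List α) (q : ℕ) : Prop :=
  1 ≤ q ∧ ∀ j, j + q < v.length → v[j]? = v[j + q]?

/-- A word lies in `ker ψ` if each letter of `A₄` occurs in it a number of times
divisible by `4`. -/
def InKerPsi (u : List A4) : Prop := ∀ a : A4, 4 ∣ u.count a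

/-- `q` is a kernel period of `v`: `1 ≤ q ≤ |v|`, `v` has period `q`, and the prefix of `v`
of length `q` lies in `ker ψ`. -/
def KernelPeriod (v : List A4) (q : ℕ) : Prop :=
  q ≤ v.length ∧ HasPeriod v q ∧ InKerPsi (v.take q)

/-!
Replace each letter `a` of the fixed point `w` by a block of length `(n - 1) * R`. The letters below
`16` form four orbits of size four, which are turned cyclically by amounts depending linearly and
bijectively on the Parikh vector modulo `4` of the prefix of `w` read so far; apart from this
rotation all blocks agree except in their last `16` letters.

If a repetition has a period of at least `4 * (n - 1)` that is not a multiple of the block length,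
then already the orbits of its letters disagree within five positions. If its period is `q` blocks,
the rotations, hence the Parikh vectors, at distance `q` agree for about `q / (n - 1)` consecutive
positions of `w`. This is impossible for `q ≥ 5`: a long coincidence forces `3 ∣ q` and descends to
one for `q / 3`, because the incidence matrix of `f` is invertible modulo `4`, so finitely many `q`
have to be inspected. The remaining periods, those below `4 * (n - 1)` or of less than five blocks,
only concern factors of the coding of `f²(ab)`, where `ab` is a factor of length two of `w`.

For the inspections a repetition is turned into a statement on binary numbers: the positions where a
word differs from its translate form a bit mask, and a window of `k` positions without mismatch is a
gap of `k` zeros in it.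
-/

section Words

variable {α β γ : Type*}

theorem length_mul_le_of_hasPeriod {x : ℕ → α} {m : ℕ} (hm : 0 < m)
    (hx : ∀ i p, 1 ≤ p → ∃ u ≤ p / m, x (i + u) ≠ x (i + u + p))
    {v : List α} {q : ℕ} (hv : FactorOf v x) (hq : HasPeriod v q) :
    v.length * m ≤ (m + 1) * q := by
  obtain ⟨i, hi⟩ := hv
  have hget (k : ℕ) (hk : k < v.length) : v[k]? = some (x (i + k)) := by
    rw [hi]
    simp [hk]
  obtain ⟨u, hu, hne⟩ := hx i q hq.1
  have hlen : v.length ≤ u + q := by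
    by_contra! hlt
    have := hq.2 u hlt
    rw [hget u (by omega), hget (u + q) hlt, Option.some_inj, ← add_assoc] at this
    exact hne this
  have hum : u * m ≤ q := (Nat.le_div_iff_mul_le hm).mp hu
  calc v.length * m ≤ (u + q) * m := Nat.mul_le_mul_right m hlen
    _ = u * m + q * m := add_mul ..
    _ ≤ q + q * m := Nat.add_le_add_right hum _
    _ = (m + 1) * q := by ring

theorem occursAt_iff {t : List α} {x : ℕ → α} {i : ℕ} :
    OccursAt t x i ↔ ∀ k (hk : k < t.length), t[k] = x (i + k) := by
  rw [OccursAt, List.ext_getElem_iff]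
  simp +contextual

theorem occursAt_nil (x : ℕ → α) (i : ℕ) : OccursAt [] x i := rfl

theorem occursAt_cons {a : α} {t : List α} {x : ℕ → α} {i : ℕ} :
    OccursAt (a :: t) x i ↔ a = x i ∧ OccursAt t x (i + 1) := by
  simp only [OccursAt, List.length_cons, List.range_succ_eq_map, List.map_cons, List.map_map,
    List.cons.injEq, add_zero]
  simp only [Function.comp_def, Nat.succ_eq_add_one, add_assoc, add_comm 1]

theorem occursAt_append {s t : List α} {x : ℕ → α} {i : ℕ} :
    OccursAt (s ++ t) x i ↔ OccursAt s x i ∧ OccursAt t x (i + s.length) := by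
  induction s generalizing i with
  | nil => simp [occursAt_nil]
  | cons a s ih =>
    rw [List.cons_append, occursAt_cons, ih, occursAt_cons, and_assoc, List.length_cons,
      add_right_comm, add_assoc]

namespace OccursAt

theorem map {t : List α} {x : ℕ → α} {i : ℕ} (h : OccursAt t x i) (g : α → β) :
    OccursAt (t.map g) (g ∘ x) i := by
  rw [occursAt_iff] at h ⊢
  intro k hk
  rw [List.getElem_map, h, Function.comp_apply]

theorem zipWith {s : List α} {t : List β} {x : ℕ → α} {y : ℕ → β} {i : ℕ}
    (hs : OccursAt s x i) (ht : OccursAt t y i) (g : α → β → γ) :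
    OccursAt (List.zipWith g s t) (fun k => g (x k) (y k)) i := by
  rw [occursAt_iff] at hs ht ⊢
  intro k hk
  rw [List.getElem_zipWith, hs, ht]

theorem scanl {t : List α} {x : ℕ → α} {g : β → α → β} {y : ℕ → β}
    (hy : ∀ k, y (k + 1) = g (y k) (x k)) {i : ℕ} (h : OccursAt t x i) :
    OccursAt (t.scanl g (y i)) y i := by
  induction t generalizing i with
  | nil => exact occursAt_cons.mpr ⟨rfl, occursAt_nil _ _⟩
  | cons a t ih =>
    obtain ⟨rfl, ht⟩ := occursAt_cons.mp h
    rw [List.scanl_cons, ← hy]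
    exact occursAt_cons.mpr ⟨rfl, ih ht⟩

theorem flatten {B : ℕ → List α} {x : ℕ → α} {L : ℕ} (hL : ∀ j, (B j).length = L)
    (hB : ∀ j, OccursAt (B j) x (L * j)) {t : List (List α)} {i : ℕ} (h : OccursAt t B i) :
    OccursAt t.flatten x (L * i) := by
  induction t generalizing i with
  | nil => exact occursAt_nil _ _
  | cons l t ih =>
    obtain ⟨rfl, ht⟩ := occursAt_cons.mp h
    rw [List.flatten_cons, occursAt_append, hL]
    exact ⟨hB i, ih ht⟩

end OccursAt

end Words

section Masks

variable {α : Type*}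

/-- The bit mask of `l` whose `i`-th binary digit tells whether the `i`-th letter of `l`
satisfies `f`. -/
def mask (f : α → Bool) (l : List α) : ℕ :=
  l.foldr (fun y N => bif f y then 2 * N + 1 else 2 * N) 0

/-- The bit mask of the concatenation of `ls`, assembled from the masks of its members so that the
recursion depth stays bounded by their lengths when the kernel evaluates it. -/
def flattenMask (f : α → Bool) (ls : List (List α)) : ℕ :=
  ls.foldr (fun l N => mask f l ||| N <<< l.length) 0

/-- The mask of the positions `i` of the concatenation of `ls` such that one of the tests `fs`
separates the letters at `i` and `i + p`; positions past the end fail every test. -/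
def diffMask (fs : List (α → Bool)) (ls : List (List α)) (p : ℕ) : ℕ :=
  fs.foldr (fun f N => (flattenMask f ls ^^^ flattenMask f ls >>> p) ||| N) 0

/-- The mask of the positions `i` such that `A` has a nonzero digit among `i, …, i + k - 1`. -/
def dilate (A : ℕ) : ℕ → ℕ
  | 0 => 0
  | k + 1 => A ||| dilate A k >>> 1

/-- Each of the first `m` windows of length `k` of the binary expansion of `A` contains a `1`. -/
def HitsWindows (A k m : ℕ) : Prop := dilate A k % 2 ^ m = 2 ^ m - 1

instance (A k m : ℕ) : Decidable (HitsWindows A k m) := inferInstanceAs (Decidable (_ = _))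

theorem testBit_mask (f : α → Bool) (l : List α) (i : ℕ) :
    (mask f l).testBit i = l[i]?.any f := by
  induction l generalizing i with
  | nil => simp [mask]
  | cons y l ih =>
    have hcons : mask f (y :: l) = Nat.bit (f y) (mask f l) := by
      simp [mask, Nat.bit]
    cases i with
    | zero => simp [hcons]
    | succ i => simp [hcons, Nat.testBit_bit_succ, ih]

theorem testBit_flattenMask (f : α → Bool) (ls : List (List α)) (i : ℕ) :
    (flattenMask f ls).testBit i = ls.flatten[i]?.any f := by
  induction ls generalizing i with
  | nil => simp [flattenMask]
  | cons l ls ih =>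
    have hcons : flattenMask f (l :: ls) = mask f l ||| flattenMask f ls <<< l.length := rfl
    rw [hcons, Nat.testBit_or, Nat.testBit_shiftLeft, testBit_mask, ih, List.flatten_cons]
    obtain hi | hi := lt_or_ge i l.length
    · simp [List.getElem?_append_left hi, hi]
    · simp [List.getElem?_append_right hi, hi]

theorem getElem?_ne_of_testBit_diffMask {fs : List (α → Bool)} {ls : List (List α)} {p i : ℕ}
    (h : (diffMask fs ls p).testBit i) : ls.flatten[i]? ≠ ls.flatten[i + p]? := by
  intro heq
  induction fs with
  | nil => simp [diffMask] at h
  | cons f fs ih =>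
    have hcons : diffMask (f :: fs) ls p =
        (flattenMask f ls ^^^ flattenMask f ls >>> p) ||| diffMask fs ls p := rfl
    rw [hcons, Nat.testBit_or, Nat.testBit_xor, Nat.testBit_shiftRight, testBit_flattenMask,
      testBit_flattenMask, add_comm p, heq, Bool.xor_self, Bool.false_or] at h
    exact ih h

theorem testBit_dilate {A k i : ℕ} :
    (dilate A k).testBit i ↔ ∃ t < k, A.testBit (i + t) := by
  induction k generalizing i with
  | zero => simp [dilate]
  | succ k ih =>
    rw [dilate, Nat.testBit_or, Nat.testBit_shiftRight, Bool.or_eq_true, ih]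
    simp only [Nat.exists_lt_succ_left, add_zero, add_comm 1 i, add_assoc, add_comm 1]

theorem HitsWindows.exists_testBit {A k m i : ℕ} (h : HitsWindows A k m) (hi : i < m) :
    ∃ t < k, A.testBit (i + t) := by
  have hbit : (dilate A k % 2 ^ m).testBit i := by
    rw [show dilate A k % 2 ^ m = 2 ^ m - 1 from h, Nat.testBit_two_pow_sub_one, decide_eq_true hi]
  rw [Nat.testBit_mod_two_pow, Bool.and_eq_true] at hbit
  exact testBit_dilate.mp hbit.2

theorem HitsWindows.exists_getElem {f : α → Bool} {l : List α} {k m : ℕ}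
    (h : HitsWindows (mask f l) k m) {i : ℕ} (hi : i < m) :
    ∃ t < k, ∃ ht : i + t < l.length, f l[i + t] := by
  obtain ⟨t, ht, hbit⟩ := h.exists_testBit hi
  rw [testBit_mask, Option.any_eq_true] at hbit
  obtain ⟨y, hy, hfy⟩ := hbit
  obtain ⟨hlt, rfl⟩ := List.getElem?_eq_some_iff.mp hy
  exact ⟨t, ht, hlt, hfy⟩

theorem HitsWindows.exists_ne {fs : List (α → Bool)} {ls : List (List α)} {p k m : ℕ}
    (h : HitsWindows (diffMask fs ls p) k m) (hlen : m + k + p ≤ ls.flatten.length + 1)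
    {x : ℕ → α} {s : ℕ} (hx : OccursAt ls.flatten x s) {i : ℕ} (hi : i < m) :
    ∃ t < k, x (s + i + t) ≠ x (s + i + t + p) := by
  obtain ⟨t, ht, hbit⟩ := h.exists_testBit hi
  have hne := getElem?_ne_of_testBit_diffMask hbit
  rw [occursAt_iff] at hx
  rw [List.getElem?_eq_getElem (by omega), List.getElem?_eq_getElem (by omega), hx, hx,
    Ne, Option.some_inj] at hne
  exact ⟨t, ht, by simpa only [add_assoc] using hne⟩

/-- The tests reading off the lowest `b` binary digits of a natural number. -/
def binaryTests (b : ℕ) : List (ℕ → Bool) := (List.range b).map fun j y => y.testBit j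

end Masks

section OuterWord

theorem length_fm (a : A4) : (fm a).length = 3 := by
  fin_cases a <;> rfl

theorem length_fw (u : List A4) : (fw u).length = 3 * u.length := by
  simp [fw, List.length_flatMap, length_fm, mul_comm]

theorem length_fw_iterate (k : ℕ) (u : List A4) : (fw^[k] u).length = 3 ^ k * u.length := by
  induction k with
  | zero => rw [Function.iterate_zero_apply, pow_zero, one_mul]
  | succ k ih => rw [Function.iterate_succ_apply', length_fw, ih, pow_succ', mul_assoc]

theorem lt_length_fw_iterate (k : ℕ) : k < (fw^[k] [0]).length := by
  rw [length_fw_iterate, List.length_singleton, mul_one]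
  exact Nat.lt_pow_self (by norm_num)

theorem fw_iterate_isPrefix_of_le {j k : ℕ} (h : j ≤ k) : fw^[j] [0] <+: fw^[k] [0] := by
  refine Nat.rel_of_forall_rel_succ_of_le (r := (· <+: ·)) (f := fun k => fw^[k] [0]) ?_ h
  intro k
  induction k with
  | zero => decide
  | succ k ih =>
    rw [Function.iterate_succ_apply', Function.iterate_succ_apply']
    exact ih.flatMap fm

theorem occursAt_w_fw_iterate (k : ℕ) : OccursAt (fw^[k] [0]) w 0 := by
  rw [occursAt_iff]
  intro i hi
  have hi' : i < (fw^[i + 1] [0]).length := i.lt_succ_self.trans (lt_length_fw_iterate _)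
  rw [zero_add, w, List.getD_eq_getElem _ _ hi']
  obtain h | h := le_total k (i + 1)
  · exact (fw_iterate_isPrefix_of_le h).getElem hi
  · exact ((fw_iterate_isPrefix_of_le h).getElem hi').symm

theorem occursAt_w_fm (j : ℕ) : OccursAt (fm (w j)) w (3 * j) := by
  have hj := lt_length_fw_iterate j
  have hsplit : fw^[j] [0] = (fw^[j] [0]).take j ++ (w j :: (fw^[j] [0]).drop (j + 1)) := by
    have hwj := occursAt_iff.mp (occursAt_w_fw_iterate j) j hj
    rw [zero_add] at hwj
    rw [← hwj, List.getElem_cons_drop, List.take_append_drop]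
  have hocc := occursAt_w_fw_iterate (j + 1)
  rw [Function.iterate_succ_apply', hsplit, fw, List.flatMap_append, List.flatMap_cons,
    occursAt_append, occursAt_append] at hocc
  have hlen : (((fw^[j] [0]).take j).flatMap fm).length = 3 * j := by
    rw [← fw, length_fw, List.length_take_of_le hj.le]
  simpa only [hlen, zero_add] using hocc.2.1

theorem OccursAt.fw_iterate {t : List A4} {i : ℕ} (h : OccursAt t w i) (k : ℕ) :
    OccursAt (fw^[k] t) w (3 ^ k * i) := by
  induction k with
  | zero => simpa using h
  | succ k ih =>
    rw [Function.iterate_succ_apply', pow_succ', mul_assoc, fw, List.flatMap_def]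
    exact (ih.map fm).flatten (fun _ => length_fm _) occursAt_w_fm

theorem w_three_mul_add (u : ℕ) {r : ℕ} (hr : r < 3) : w (3 * u + r) = (fm (w u)).getD r 0 := by
  have hr' : r < (fm (w u)).length := by rwa [length_fm]
  rw [List.getD_eq_getElem _ _ hr', occursAt_iff.mp (occursAt_w_fm u)]

theorem w_three_mul (u : ℕ) : w (3 * u) = 0 := by
  have h : ∀ a : A4, (fm a).getD 0 0 = 0 := by decide
  exact (w_three_mul_add u (by norm_num)).trans (h _)

theorem w_three_mul_add_one_ne_zero (u : ℕ) : w (3 * u + 1) ≠ 0 := by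
  have h : ∀ a : A4, (fm a).getD 1 0 ≠ 0 := by decide
  rw [w_three_mul_add u (by norm_num)]
  exact h _

theorem three_dvd_of_w_eq {s q : ℕ} (h : ∀ t < 3, w (s + t) = w (s + t + q)) : 3 ∣ q := by
  have h' (i : ℕ) (hi : s ≤ i ∧ i < s + 3) : w i = w (i + q) := by
    have := h (i - s) (by omega)
    rwa [Nat.add_sub_of_le hi.1] at this
  by_contra hq
  obtain hq | hq : q % 3 = 1 ∨ q % 3 = 2 := by omega
  · have hw := h' (3 * ((s + 2) / 3)) (by omega)
    rw [w_three_mul, show 3 * ((s + 2) / 3) + q = 3 * ((s + 2) / 3 + q / 3) + 1 by omega] at hw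
    exact w_three_mul_add_one_ne_zero _ hw.symm
  · have hw := h' (3 * ((s + 1) / 3) + 1) (by omega)
    rw [show 3 * ((s + 1) / 3) + 1 + q = 3 * ((s + 1) / 3 + q / 3 + 1) by omega,
      w_three_mul] at hw
    exact w_three_mul_add_one_ne_zero _ hw

theorem occursAt_w_fw_iterate_pair (k u : ℕ) :
    OccursAt (fw^[k] [w u, w (u + 1)]) w (3 ^ k * u) :=
  OccursAt.fw_iterate (by simp [occursAt_cons, occursAt_nil]) k

/-- The factors of length two of `w`. -/
def pairs : List (A4 × A4) :=
  [(0, 0), (0, 1), (0, 3), (1, 0), (1, 2), (2, 0), (3, 0), (3, 1)]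

theorem mem_pairs (i : ℕ) : (w i, w (i + 1)) ∈ pairs := by
  have hfm : ∀ a : A4, (0, (fm a).getD 1 0) ∈ pairs ∧
      ((fm a).getD 1 0, (fm a).getD 2 0) ∈ pairs ∧ ((fm a).getD 2 0, 0) ∈ pairs := by decide
  obtain ⟨h₀, h₁, h₂⟩ := hfm (w (i / 3))
  rw [← w_three_mul_add _ (by norm_num)] at h₀ h₁ h₂
  rw [← w_three_mul_add _ (by norm_num)] at h₁
  obtain hi | hi | hi : i = 3 * (i / 3) ∨ i = 3 * (i / 3) + 1 ∨ i = 3 * (i / 3) + 2 := by omega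
  · rwa [hi, w_three_mul]
  · rwa [hi]
  · rwa [hi, show 3 * (i / 3) + 2 + 1 = 3 * (i / 3 + 1) by ring, w_three_mul]

end OuterWord

section Parikh

open Matrix

/-- The Parikh vector modulo `4` of the prefix of length `j` of `w`. -/
def parikh (j : ℕ) : A4 → ZMod 4 := ∑ i ∈ Finset.range j, Pi.single (w i) 1

/-- The incidence matrix modulo `4` of the morphism `f`, with rows indexed by its arguments. -/
def incidence : Matrix A4 A4 (ZMod 4) := .of fun a b => (fm a).count b

theorem isUnit_incidence : IsUnit incidence := by
  rw [Matrix.isUnit_iff_isUnit_det]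
  decide +kernel

theorem parikh_succ (j : ℕ) : parikh (j + 1) = parikh j + Pi.single (w j) 1 :=
  Finset.sum_range_succ ..

theorem parikh_vecMul {κ : Type*} (E : Matrix A4 κ (ZMod 4)) (j : ℕ) :
    parikh j ᵥ* E = ∑ i ∈ Finset.range j, E.row (w i) := by
  simp only [parikh, Matrix.sum_vecMul, Matrix.single_one_vecMul]

theorem sum_single_fm (a : A4) :
    ∑ r ∈ Finset.range 3, Pi.single ((fm a).getD r 0) 1 = incidence.row a := by
  unfold incidence
  revert a
  decide

theorem parikh_three_mul (u : ℕ) : parikh (3 * u) = parikh u ᵥ* incidence := by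
  rw [parikh_vecMul]
  induction u with
  | zero => rfl
  | succ u ih =>
    rw [Finset.sum_range_succ, ← ih, ← sum_single_fm, parikh, mul_add, Finset.sum_range_add]
    congr 1
    exact Finset.sum_congr rfl fun r hr => by rw [w_three_mul_add u (Finset.mem_range.mp hr)]

theorem w_eq_of_parikh_eq {j k : ℕ} (h : parikh j = parikh k)
    (h' : parikh (j + 1) = parikh (k + 1)) : w j = w k := by
  rw [parikh_succ, parikh_succ, h, add_right_inj] at h'
  by_contra hne
  have := congrFun h' (w j)
  rw [Pi.single_eq_same, Pi.single_eq_of_ne hne] at this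
  exact absurd this (by decide)

theorem parikh_eq_of_three_mul {j k : ℕ} (h : parikh (3 * j) = parikh (3 * k)) :
    parikh j = parikh k := by
  rw [parikh_three_mul, parikh_three_mul] at h
  exact Matrix.vecMul_injective_of_isUnit isUnit_incidence h

/-- The length of a window of positions in which the Parikh vectors at distance `q` have to disagree
at least once. For `5 ≤ q < 205` it is the greatest `k` such that `31 * t + 5 ≤ q` for all `t < k`,
which is what the coding by blocks can afford; from `205` on the smaller value `q / 31` suffices,
and its form is the one that passes from `q` to `3 * q`. -/
def kernelBound (q : ℕ) : ℕ := if q < 205 then (q - 5) / 31 + 1 else q / 31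

theorem mul_add_le_of_lt_kernelBound {q t : ℕ} (hq : 5 ≤ q) (ht : t < kernelBound q) :
    31 * t + 5 ≤ q := by
  unfold kernelBound at ht
  split_ifs at ht <;> omega

/-- Tests separating the vectors with entries in `ZMod 4`: the binary digits of the entries. -/
def vectorTests : List ((A4 → ZMod 4) → Bool) :=
  (List.finRange 4).flatMap fun a => (binaryTests 2).map fun f v => f (v a).val

theorem hitsWindows_parikh : ∀ ab ∈ pairs, ∀ q < 615, 0 < q →
    HitsWindows (diffMask vectorTests
      [((fw^[6] [ab.1, ab.2]).map fun a => Pi.single a 1).scanl (· + ·) 0] q)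
      (kernelBound q) 729 := by
  decide +kernel

theorem parikh_ne_of_lt {q : ℕ} (hq : 0 < q) (hq' : q < 615) (s : ℕ) :
    ∃ t < kernelBound q, parikh (s + t) ≠ parikh (s + t + q) := by
  have hu : 3 ^ 6 * (s / 729) + s % 729 = s := Nat.div_add_mod s 729
  set u := s / 729
  have hletters := (occursAt_w_fw_iterate_pair 6 u).map fun a => (Pi.single a 1 : A4 → ZMod 4)
  have hsum := hletters.scanl (g := (· + ·)) (y := fun k => parikh k - parikh (3 ^ 6 * u))
    fun k => by rw [parikh_succ, add_sub_right_comm, Function.comp_apply]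
  rw [sub_self] at hsum
  have hlen : (fw^[6] [w u, w (u + 1)]).length = 1458 := by
    rw [length_fw_iterate]
    rfl
  have hk : kernelBound q ≤ 19 := by
    unfold kernelBound
    split_ifs <;> omega
  obtain ⟨t, ht, hne⟩ := (hitsWindows_parikh _ (mem_pairs u) q hq' hq).exists_ne
    (x := fun k => parikh k - parikh (3 ^ 6 * u)) (s := 3 ^ 6 * u) (i := s % 729)
    (by simp only [List.flatten_singleton, List.length_scanl, List.length_map, hlen]; omega)
    (by simpa only [List.flatten_singleton] using hsum) (Nat.mod_lt s (by norm_num))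
  rw [hu] at hne
  exact ⟨t, ht, fun h => hne (congrArg (· - _) h)⟩

-- The bound `q / 31` is inherited by `3 * q`, because positions congruent modulo `3` in a window
-- of `3 * k` positions form a window of `k` positions one level down.
theorem parikh_ne (s : ℕ) {q : ℕ} (hq : 0 < q) :
    ∃ t < kernelBound q, parikh (s + t) ≠ parikh (s + t + q) := by
  induction q using Nat.strong_induction_on generalizing s with
  | h q ih =>
    obtain hlt | hge := lt_or_ge q 615
    · exact parikh_ne_of_lt hq hlt s
    by_contra! heq
    have hbound (r : ℕ) (hr : 205 ≤ r) : kernelBound r = r / 31 := if_neg (by omega)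
    rw [hbound q (by omega)] at heq
    obtain ⟨r, rfl⟩ : 3 ∣ q := three_dvd_of_w_eq (s := s) fun t ht =>
      w_eq_of_parikh_eq (heq t (by omega)) (by
        simpa only [add_right_comm _ 1, ← add_assoc] using heq (t + 1) (by omega))
    obtain ⟨t, ht, hne⟩ := ih r (by omega) ((s + 2) / 3) (by omega)
    rw [hbound r (by omega)] at ht
    refine hne (parikh_eq_of_three_mul ?_)
    have := heq (3 * ((s + 2) / 3 + t) - s) (by omega)
    rwa [Nat.add_sub_of_le (by omega), ← mul_add] at this

end Parikh

section Rotations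

/-- The rotation by `v` of the letters: for each `s < 4` it turns the orbit `{4s, …, 4s + 3}`
cyclically by `v s`, and it fixes the letters from `16` on. -/
def rotateLetter (v : Fin 4 → ZMod 4) (y : ℕ) : ℕ :=
  if y < 16 then 4 * (y / 4) + (y + (v (Fin.ofNat 4 (y / 4))).val) % 4 else y

/-- A number identifying the orbit of the letter `y` under all rotations. The values for the rotated
letters and for the fixed ones do not overlap. -/
def orbitRep (y : ℕ) : ℕ := if y < 16 then y / 4 else y

theorem rotateLetter_of_lt {y : ℕ} (hy : y < 16) (v : Fin 4 → ZMod 4) :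
    rotateLetter v y = 4 * (y / 4) + (y + (v (Fin.ofNat 4 (y / 4))).val) % 4 :=
  if_pos hy

theorem rotateLetter_of_le {y : ℕ} (hy : 16 ≤ y) (v : Fin 4 → ZMod 4) : rotateLetter v y = y :=
  if_neg hy.not_gt

theorem rotateLetter_div_four (v : Fin 4 → ZMod 4) (y : ℕ) : rotateLetter v y / 4 = y / 4 := by
  unfold rotateLetter
  split_ifs <;> omega

theorem rotateLetter_lt {n y : ℕ} (hn : 16 ≤ n) (hy : y < n) (v : Fin 4 → ZMod 4) :
    rotateLetter v y < n := by
  have := rotateLetter_div_four v y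
  unfold rotateLetter at *
  split_ifs at * <;> omega

theorem rotateLetter_lt_sixteen_iff (v : Fin 4 → ZMod 4) (y : ℕ) :
    rotateLetter v y < 16 ↔ y < 16 := by
  have := rotateLetter_div_four v y
  omega

theorem orbitRep_rotateLetter (v : Fin 4 → ZMod 4) (y : ℕ) :
    orbitRep (rotateLetter v y) = orbitRep y := by
  obtain hy | hy := lt_or_ge y 16
  · rw [orbitRep, if_pos ((rotateLetter_lt_sixteen_iff v y).mpr hy), rotateLetter_div_four,
      orbitRep, if_pos hy]
  · rw [rotateLetter_of_le hy]

theorem rotateLetter_rotateLetter (u v : Fin 4 → ZMod 4) (y : ℕ) :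
    rotateLetter u (rotateLetter v y) = rotateLetter (u + v) y := by
  obtain hy | hy := lt_or_ge y 16
  · rw [rotateLetter_of_lt ((rotateLetter_lt_sixteen_iff v y).mpr hy), rotateLetter_div_four,
      rotateLetter_of_lt hy, rotateLetter_of_lt hy, Pi.add_apply, ZMod.val_add]
    omega
  · rw [rotateLetter_of_le hy, rotateLetter_of_le hy, rotateLetter_of_le hy]

theorem eq_of_rotateLetter_eq {u v : Fin 4 → ZMod 4} {y : ℕ} {s : Fin 4} (hy : y / 4 = s)
    (h : rotateLetter u y = rotateLetter v y) : u s = v s := by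
  have hy16 : y < 16 := by omega
  rw [rotateLetter_of_lt hy16, rotateLetter_of_lt hy16, hy, Fin.ofNat_val_eq_self] at h
  have hu := (u s).val_lt
  have hv := (v s).val_lt
  exact ZMod.val_injective 4 (by omega)

end Rotations

section Shift

open Matrix

/-- The matrix whose row `a` is the amount by which a block coding the letter `a` turns the orbits
in all the later blocks. -/
def shiftMatrix : Matrix A4 (Fin 4) (ZMod 4) :=
  !![1, 0, 1, 0; 1, 1, 1, 0; 1, 0, 1, 1; 1, 1, 0, 1]

theorem isUnit_shiftMatrix : IsUnit shiftMatrix := by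
  rw [Matrix.isUnit_iff_isUnit_det]
  decide +kernel

/-- The rotation applied to the block with index `j`. -/
def shift (j : ℕ) : Fin 4 → ZMod 4 := parikh j ᵥ* shiftMatrix

theorem shift_succ (j : ℕ) : shift (j + 1) = shift j + shiftMatrix.row (w j) := by
  rw [shift, parikh_vecMul, Finset.sum_range_succ, ← parikh_vecMul, shift]

theorem parikh_eq_of_shift_eq {j k : ℕ} (h : shift j = shift k) : parikh j = parikh k :=
  Matrix.vecMul_injective_of_isUnit isUnit_shiftMatrix h

end Shift

/-- The data of a coding of `w` by blocks of letters below `n`: the block coding the letter `a` is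
`base ++ tail a`, and its length is to be `(n - 1) * reps`, so that `reps * q` letters are what a
repetition with period `q` blocks may have beyond its period. -/
structure BlockCode (n : ℕ) where
  reps : ℕ
  base : List ℕ
  tail : A4 → List ℕ

namespace BlockCode

variable {n : ℕ} (C : BlockCode n)

/-- The common length of the blocks. -/
def blockLength : ℕ := (n - 1) * C.reps

/-- The block coding the letter `a`, before rotation. -/
def block (a : A4) : List ℕ := C.base ++ C.tail a

/-- The rotated blocks coding the word `u`, when the first of them is not rotated. -/
def blocks (u : List A4) : List (List ℕ) :=
  List.zipWith (fun a v => (C.block a).map (rotateLetter v)) u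
    ((u.map shiftMatrix.row).scanl (· + ·) 0)

/-- The block with index `j` of the word coded by `C`. -/
def blockAt (j : ℕ) : List ℕ := (C.block (w j)).map (rotateLetter (shift j))

/-- The infinite word obtained by concatenating the blocks `C.blockAt j`. -/
def word (i : ℕ) : ℕ := (C.blockAt (i / C.blockLength)).getD (i % C.blockLength) 0

/-- The word formed by the orbits of the letters of a block, which by
`IsValid.map_orbitRep_block` does not depend on the block. -/
def orbits : List ℕ := (C.block 0).map orbitRep

/-- The finitely many conditions on a coding which imply that its word has no factor of exponent
greater than `n / (n - 1)`. -/
structure IsValid : Prop where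
  sixteen_le : 16 ≤ n
  le_thirtyTwo : n ≤ 32
  le_reps : 15 ≤ C.reps
  length_base : C.base.length + 16 = C.blockLength
  length_block : ∀ a, (C.block a).length = C.blockLength
  lt_of_mem_block : ∀ a, ∀ y ∈ C.block a, y < n
  map_orbitRep_block : ∀ a, (C.block a).map orbitRep = C.orbits
  hitsWindows_base : ∀ s < 4, HitsWindows (mask (· / 4 == s) C.base) 29 (C.base.length - 28)
  hitsWindows_orbits : ∀ d < C.blockLength, 0 < d →
    HitsWindows (diffMask (binaryTests 5) [C.orbits, C.orbits, C.orbits] d) 5 C.blockLength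
  hitsWindows_short : ∀ ab ∈ pairs, ∀ p < 4 * (n - 1), 0 < p →
    HitsWindows (diffMask (binaryTests 5) (C.blocks (fw^[2] [ab.1, ab.2])) p)
      (p / (n - 1) + 1) (9 * C.blockLength)
  hitsWindows_blocks : ∀ ab ∈ pairs, ∀ q < 5, 0 < q →
    HitsWindows (diffMask (binaryTests 5) (C.blocks (fw^[2] [ab.1, ab.2])) (C.blockLength * q))
      (C.reps * q + 1) (9 * C.blockLength)

namespace IsValid

variable {C} (hC : C.IsValid)
include hC

theorem le_blockLength : 225 ≤ C.blockLength :=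
  Nat.mul_le_mul (Nat.le_sub_one_of_lt hC.sixteen_le) hC.le_reps

theorem length_blockAt (j : ℕ) : (C.blockAt j).length = C.blockLength := by
  rw [blockAt, List.length_map, hC.length_block]

theorem occursAt_blockAt (j : ℕ) : OccursAt (C.blockAt j) C.word (C.blockLength * j) := by
  rw [occursAt_iff]
  intro k hk
  have hk' : k < C.blockLength := by rwa [hC.length_blockAt] at hk
  rw [word, Nat.mul_add_div (by omega), Nat.mul_add_mod, Nat.mod_eq_of_lt hk',
    Nat.div_eq_of_lt hk', add_zero, List.getD_eq_getElem _ _ hk]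

theorem occursAt_map_base (j : ℕ) :
    OccursAt (C.base.map (rotateLetter (shift j))) C.word (C.blockLength * j) := by
  have h := hC.occursAt_blockAt j
  rw [blockAt, block, List.map_append, occursAt_append] at h
  exact h.1

theorem word_lt (i : ℕ) : C.word i < n := by
  have hi : i % C.blockLength < (C.blockAt (i / C.blockLength)).length := by
    rw [hC.length_blockAt]
    exact Nat.mod_lt i (by have := hC.le_blockLength; omega)
  rw [word, List.getD_eq_getElem _ _ hi]
  obtain ⟨y, hy, heq⟩ := List.mem_map.mp (List.getElem_mem hi)
  rw [← heq]
  exact rotateLetter_lt hC.sixteen_le (hC.lt_of_mem_block _ y hy) _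

theorem occursAt_orbits (j : ℕ) :
    OccursAt C.orbits (orbitRep ∘ C.word) (C.blockLength * j) := by
  have h := (hC.occursAt_blockAt j).map orbitRep
  rwa [blockAt, List.map_map, funext (f := orbitRep ∘ _) (orbitRep_rotateLetter _),
    hC.map_orbitRep_block] at h

theorem occursAt_flatten_blocks {u : List A4} {j : ℕ} (hu : OccursAt u w j) :
    OccursAt (C.blocks u).flatten (rotateLetter (-shift j) ∘ C.word) (C.blockLength * j) := by
  have hsum := (hu.map shiftMatrix.row).scanl (g := (· + ·)) (y := fun k => shift k - shift j)
    fun k => by rw [shift_succ, add_sub_right_comm, Function.comp_apply]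
  rw [sub_self] at hsum
  refine (hu.zipWith hsum _).flatten (fun k => ?_) fun k => ?_
  · rw [List.length_map, hC.length_block]
  · have h := (hC.occursAt_blockAt k).map (rotateLetter (-shift j))
    rwa [blockAt, List.map_map, funext (f := rotateLetter _ ∘ _) (rotateLetter_rotateLetter _ _),
      neg_add_eq_sub] at h

theorem length_flatten_blocks (u : List A4) :
    (C.blocks u).flatten.length = C.blockLength * u.length := by
  have hlen : ∀ m ∈ (C.blocks u).map List.length, m = C.blockLength := by
    intro m hm
    obtain ⟨l, hl, rfl⟩ := List.mem_map.mp hm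
    obtain ⟨k, hk, rfl⟩ := List.mem_iff_getElem.mp hl
    simp only [blocks, List.getElem_zipWith, List.length_map, hC.length_block]
  have hcard : ((C.blocks u).map List.length).length = u.length := by
    simp [blocks]
  rw [List.length_flatten, List.sum_eq_card_nsmul _ _ hlen, hcard, smul_eq_mul, mul_comm]

theorem exists_ne_of_hitsWindows {p k : ℕ} (hpk : k + p ≤ 9 * C.blockLength)
    (h : ∀ ab ∈ pairs, HitsWindows (diffMask (binaryTests 5) (C.blocks (fw^[2] [ab.1, ab.2])) p)
      k (9 * C.blockLength)) (i : ℕ) :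
    ∃ t < k, C.word (i + t) ≠ C.word (i + t + p) := by
  have hL := hC.le_blockLength
  set u := i / (9 * C.blockLength)
  have hi : C.blockLength * (3 ^ 2 * u) + i % (9 * C.blockLength) = i := by
    rw [mul_left_comm, ← mul_assoc]
    exact Nat.div_add_mod i _
  have hlen : (fw^[2] [w u, w (u + 1)]).length = 18 := by
    rw [length_fw_iterate]
    rfl
  have hocc := hC.occursAt_flatten_blocks (occursAt_w_fw_iterate_pair 2 u)
  obtain ⟨t, ht, hne⟩ := (h _ (mem_pairs u)).exists_ne
    (by rw [hC.length_flatten_blocks, hlen]; omega) hocc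
    (Nat.mod_lt i (show 0 < 9 * C.blockLength by omega))
  rw [hi] at hne
  exact ⟨t, ht, fun heq => hne (congrArg (rotateLetter _) heq)⟩

theorem periodic_orbitRep_word : Function.Periodic (orbitRep ∘ C.word) C.blockLength := by
  intro i
  have hi := Nat.div_add_mod i C.blockLength
  have hlt : i % C.blockLength < C.orbits.length := by
    rw [orbits, List.length_map, hC.length_block]
    exact Nat.mod_lt i (by have := hC.le_blockLength; omega)
  have h (j : ℕ) := occursAt_iff.mp (hC.occursAt_orbits j) _ hlt
  rw [← hi, add_right_comm, ← mul_add_one, ← h, ← h]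

theorem exists_ne_of_not_dvd {p : ℕ} (hp : ¬ C.blockLength ∣ p) (i : ℕ) :
    ∃ t < 5, C.word (i + t) ≠ C.word (i + t + p) := by
  have hL := hC.le_blockLength
  have hL0 : 0 < C.blockLength := by omega
  have hd := Nat.mod_lt p hL0
  have hlen : C.orbits.length = C.blockLength := by rw [orbits, List.length_map, hC.length_block]
  have hocc : OccursAt [C.orbits, C.orbits, C.orbits].flatten (orbitRep ∘ C.word)
      (C.blockLength * (i / C.blockLength)) :=
    OccursAt.flatten (B := fun _ => C.orbits) (fun _ => hlen) hC.occursAt_orbits rfl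
  have hlen' : [C.orbits, C.orbits, C.orbits].flatten.length = C.blockLength * 3 := by
    simp only [List.flatten_cons, List.flatten_nil, List.length_append, List.length_nil, hlen]
    omega
  have hd0 : 0 < p % C.blockLength :=
    Nat.pos_of_ne_zero fun h => hp (Nat.dvd_of_mod_eq_zero h)
  obtain ⟨t, ht, hne⟩ := (hC.hitsWindows_orbits _ hd hd0).exists_ne
    (by rw [hlen']; omega) hocc (Nat.mod_lt i hL0)
  rw [Nat.div_add_mod] at hne
  refine ⟨t, ht, fun heq => hne ?_⟩
  calc orbitRep (C.word (i + t)) = orbitRep (C.word (i + t + p)) := congrArg orbitRep heq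
    _ = orbitRep (C.word (i + t + p % C.blockLength + p / C.blockLength * C.blockLength)) := by
      rw [add_assoc (i + t), Nat.mod_add_div']
    _ = orbitRep (C.word (i + t + p % C.blockLength)) :=
      hC.periodic_orbitRep_word.nat_mul _ _

theorem shift_eq_of_word_eq {j k r : ℕ} (hr : r + 29 ≤ C.base.length)
    (h : ∀ t < 29, C.word (C.blockLength * j + (r + t)) = C.word (C.blockLength * k + (r + t))) :
    shift j = shift k := by
  ext1 s
  obtain ⟨t, ht, hlt, hs⟩ :=
    (hC.hitsWindows_base s s.isLt).exists_getElem (i := r) (by omega)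
  have hword (j : ℕ) := occursAt_iff.mp (hC.occursAt_map_base j) (r + t) (by simpa using hlt)
  simp only [List.getElem_map] at hword
  exact eq_of_rotateLetter_eq (beq_iff_eq.mp hs) (by rw [hword, hword, h t ht])

theorem exists_ne_of_five_le {q : ℕ} (hq : 5 ≤ q) (i : ℕ) :
    ∃ t < C.reps * q + 1, C.word (i + t) ≠ C.word (i + t + C.blockLength * q) := by
  by_contra! heq
  have hL := hC.le_blockLength
  -- `45 = 29 + 16`, since `29` letters of the block have to be read before its tail of length `16`.
  have hshift (j : ℕ) (hj : i + 45 ≤ C.blockLength * (j + 1))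
      (hj' : C.blockLength * j + 28 ≤ i + C.reps * q) : shift j = shift (j + q) := by
    refine hC.shift_eq_of_word_eq (r := i - C.blockLength * j) ?_ fun t ht => ?_
    · have := hC.length_base
      rw [mul_add_one] at hj
      omega
    · have := Nat.mul_le_mul hC.le_reps hq
      have := heq (C.blockLength * j + (i - C.blockLength * j + t) - i) (by omega)
      rwa [Nat.add_sub_of_le (by omega), add_right_comm, ← mul_add] at this
  obtain ⟨t, ht, hne⟩ := parikh_ne ((i + 44) / C.blockLength) (by omega : 0 < q)
  refine hne (parikh_eq_of_shift_eq (hshift _ ?_ ?_))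
  · have := Nat.lt_mul_div_succ (i + 44) (by omega : 0 < C.blockLength)
    calc i + 45 ≤ C.blockLength * ((i + 44) / C.blockLength + 1) := this
      _ ≤ _ := Nat.mul_le_mul_left _ (by omega)
  · have hdiv := Nat.mul_div_le (i + 44) C.blockLength
    have ht' : C.blockLength * t + 75 ≤ C.reps * q :=
      calc C.blockLength * t + 75 ≤ C.blockLength * t + C.reps * 5 := by
            have := hC.le_reps; omega
        _ ≤ C.reps * (31 * t) + C.reps * 5 := by
            have hn := hC.le_thirtyTwo
            rw [blockLength, mul_comm (n - 1), mul_assoc]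
            gcongr
            omega
        _ = C.reps * (31 * t + 5) := (mul_add ..).symm
        _ ≤ C.reps * q := Nat.mul_le_mul_left _ (mul_add_le_of_lt_kernelBound hq ht)
    rw [mul_add]
    omega

theorem exists_ne_of_pos {p : ℕ} (hp : 0 < p) (i : ℕ) :
    ∃ t ≤ p / (n - 1), C.word (i + t) ≠ C.word (i + t + p) := by
  have hn := hC.sixteen_le
  have hL : C.blockLength = (n - 1) * C.reps := rfl
  simp only [← Nat.lt_succ_iff, Nat.succ_eq_add_one]
  obtain hlt | hle := lt_or_ge p (4 * (n - 1))
  · refine hC.exists_ne_of_hitsWindows ?_ (fun ab hab => hC.hitsWindows_short ab hab p hlt hp) i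
    have := Nat.div_le_self p (n - 1)
    have := Nat.mul_le_mul_left (n - 1) hC.le_reps
    omega
  by_cases hdvd : C.blockLength ∣ p
  · obtain ⟨q, rfl⟩ := hdvd
    have hdiv : C.blockLength * q / (n - 1) = C.reps * q := by
      rw [hL, mul_assoc, Nat.mul_div_cancel_left _ (by omega)]
    rw [hdiv]
    obtain hq | hq := lt_or_ge q 5
    · have hq0 : 0 < q := Nat.pos_of_mul_pos_left hp
      refine hC.exists_ne_of_hitsWindows ?_
        (fun ab hab => hC.hitsWindows_blocks ab hab q hq hq0) i
      have : C.reps ≤ C.blockLength := Nat.le_mul_of_pos_left _ (by omega)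
      have := hC.le_blockLength
      interval_cases q <;> omega
    · exact hC.exists_ne_of_five_le hq i
  · obtain ⟨t, ht, hne⟩ := hC.exists_ne_of_not_dvd hdvd i
    have := (Nat.le_div_iff_mul_le (by omega)).mpr hle
    exact ⟨t, by omega, hne⟩

theorem exists_word : ∃ x : ℕ → Fin n, ∀ (v : List (Fin n)) (q : ℕ),
    FactorOf v x → HasPeriod v q → (v.length : ℚ) ≤ (n : ℚ) * q / ((n : ℚ) - 1) := by
  have hn := hC.sixteen_le
  refine ⟨fun i => ⟨C.word i, hC.word_lt i⟩, fun v q hv hq => ?_⟩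
  have hlen : v.length * (n - 1) ≤ (n - 1 + 1) * q :=
    length_mul_le_of_hasPeriod (by omega) (fun i p hp => by
      simpa only [ne_eq, Fin.mk.injEq] using hC.exists_ne_of_pos hp i) hv hq
  rw [Nat.sub_add_cancel (by omega)] at hlen
  have hn1 : (1 : ℚ) < n := by exact_mod_cast (by omega : 1 < n)
  rw [le_div_iff₀ (sub_pos.mpr hn1), ← Nat.cast_pred (by omega)]
  exact_mod_cast hlen

end IsValid

end BlockCode

/-- A coding of `w` over `30` letters by blocks of length `29 * 16`. -/
def code30 : BlockCode 30 where
  reps := 16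
  base :=
    [16, 29, 18, 17, 19, 21, 20, 0, 22, 3, 1, 23, 2, 4, 24, 7, 5, 25, 6, 8, 26, 11, 9, 27, 10, 12,
     28, 15, 13, 16, 14, 18, 29, 17, 21, 19, 0, 20, 3, 22, 23, 1, 4, 2, 7, 24, 25, 5, 8, 6, 11, 26,
     27, 9, 12, 10, 15, 28, 16, 13, 18, 14, 29, 21, 17, 0, 19, 3, 20, 23, 22, 4, 1, 7, 2, 25, 24, 8,
     5, 11, 6, 27, 26, 12, 9, 15, 10, 16, 28, 18, 13, 14, 21, 29, 0, 17, 3, 19, 23, 20, 4, 22, 7, 1,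
     25, 2, 8, 24, 11, 5, 27, 6, 12, 26, 15, 9, 16, 10, 18, 28, 13, 21, 14, 0, 29, 3, 17, 23, 19, 4,
     20, 7, 22, 25, 1, 8, 2, 11, 24, 27, 5, 12, 6, 15, 26, 16, 9, 18, 10, 28, 21, 13, 0, 14, 3, 29,
     23, 17, 4, 19, 7, 20, 25, 22, 8, 1, 11, 2, 27, 24, 12, 5, 15, 6, 16, 26, 18, 9, 10, 21, 28, 0,
     13, 3, 14, 23, 29, 4, 17, 7, 19, 25, 20, 8, 22, 11, 1, 27, 2, 12, 24, 15, 5, 16, 6, 18, 26, 9,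
     21, 10, 0, 28, 3, 13, 23, 14, 4, 29, 7, 17, 25, 19, 8, 20, 11, 22, 27, 1, 12, 2, 15, 24, 16, 5,
     18, 6, 26, 21, 9, 0, 10, 3, 28, 23, 13, 4, 14, 7, 29, 25, 17, 8, 19, 11, 20, 27, 22, 12, 1, 15,
     2, 16, 24, 18, 5, 6, 21, 26, 0, 9, 3, 10, 23, 28, 4, 13, 7, 14, 25, 29, 8, 17, 11, 19, 27, 20,
     12, 22, 15, 1, 16, 2, 18, 24, 5, 21, 6, 0, 26, 3, 9, 23, 10, 4, 28, 7, 13, 25, 14, 8, 29, 11,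
     17, 27, 19, 12, 20, 15, 22, 16, 1, 18, 2, 24, 21, 5, 0, 6, 3, 26, 23, 9, 4, 10, 7, 28, 25, 13,
     8, 14, 11, 29, 27, 17, 12, 19, 15, 20, 16, 22, 18, 1, 2, 21, 24, 0, 5, 3, 6, 23, 26, 4, 9, 7,
     10, 25, 28, 8, 13, 11, 14, 27, 29, 12, 17, 15, 19, 16, 20, 18, 22, 1, 21, 2, 0, 24, 3, 5, 23,
     6, 4, 26, 7, 9, 25, 10, 8, 28, 11, 13, 27, 14, 12, 29, 15, 17, 16, 19, 18, 20, 22, 21, 1, 0, 2,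
     3, 24, 23, 5, 4, 6, 7, 26, 25, 9, 8, 10, 11, 28, 27, 13, 12, 14, 15, 29, 16, 17, 18, 19, 20,
     21, 22, 1, 2, 0, 3, 23, 24]
  tail :=
    ![[4, 5, 7, 6, 25, 26, 9, 10, 8, 11, 27, 28, 12, 13, 15, 14],
      [5, 6, 4, 7, 25, 26, 9, 10, 8, 11, 27, 28, 12, 13, 15, 14],
      [4, 5, 7, 6, 25, 26, 9, 10, 8, 11, 27, 28, 13, 14, 12, 15],
      [5, 6, 4, 7, 25, 26, 8, 9, 11, 10, 27, 28, 13, 14, 12, 15]]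

/-- A coding of `w` over `31` letters by blocks of length `30 * 16`. -/
def code31 : BlockCode 31 where
  reps := 16
  base :=
    [16, 30, 18, 17, 20, 19, 22, 21, 0, 23, 3, 1, 24, 2, 4, 25, 7, 5, 26, 6, 8, 27, 11, 9, 28, 10,
     12, 29, 15, 13, 16, 14, 18, 30, 20, 17, 22, 19, 0, 21, 3, 23, 24, 1, 4, 2, 7, 25, 26, 5, 8, 6,
     11, 27, 28, 9, 12, 10, 15, 29, 16, 13, 18, 14, 20, 30, 22, 17, 0, 19, 3, 21, 24, 23, 4, 1, 7,
     2, 26, 25, 8, 5, 11, 6, 28, 27, 12, 9, 15, 10, 16, 29, 18, 13, 20, 14, 22, 30, 0, 17, 3, 19,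
     24, 21, 4, 23, 7, 1, 26, 2, 8, 25, 11, 5, 28, 6, 12, 27, 15, 9, 16, 10, 18, 29, 20, 13, 22, 14,
     0, 30, 3, 17, 24, 19, 4, 21, 7, 23, 26, 1, 8, 2, 11, 25, 28, 5, 12, 6, 15, 27, 16, 9, 18, 10,
     20, 29, 22, 13, 0, 14, 3, 30, 24, 17, 4, 19, 7, 21, 26, 23, 8, 1, 11, 2, 28, 25, 12, 5, 15, 6,
     16, 27, 18, 9, 20, 10, 22, 29, 0, 13, 3, 14, 24, 30, 4, 17, 7, 19, 26, 21, 8, 23, 11, 1, 28, 2,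
     12, 25, 15, 5, 16, 6, 18, 27, 20, 9, 22, 10, 0, 29, 3, 13, 24, 14, 4, 30, 7, 17, 26, 19, 8, 21,
     11, 23, 28, 1, 12, 2, 15, 25, 16, 5, 18, 6, 20, 27, 22, 9, 0, 10, 3, 29, 24, 13, 4, 14, 7, 30,
     26, 17, 8, 19, 11, 21, 28, 23, 12, 1, 15, 2, 16, 25, 18, 5, 20, 6, 22, 27, 0, 9, 3, 10, 24, 29,
     4, 13, 7, 14, 26, 30, 8, 17, 11, 19, 28, 21, 12, 23, 15, 1, 16, 2, 18, 25, 20, 5, 22, 6, 0, 27,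
     3, 9, 24, 10, 4, 29, 7, 13, 26, 14, 8, 30, 11, 17, 28, 19, 12, 21, 15, 23, 16, 1, 18, 2, 20,
     25, 22, 5, 0, 6, 3, 27, 24, 9, 4, 10, 7, 29, 26, 13, 8, 14, 11, 30, 28, 17, 12, 19, 15, 21, 16,
     23, 18, 1, 20, 2, 22, 25, 0, 5, 3, 6, 24, 27, 4, 9, 7, 10, 26, 29, 8, 13, 11, 14, 28, 30, 12,
     17, 15, 19, 16, 21, 18, 23, 20, 1, 22, 2, 0, 25, 3, 5, 24, 6, 4, 27, 7, 9, 26, 10, 8, 29, 11,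
     13, 28, 14, 12, 30, 15, 17, 16, 19, 18, 21, 20, 23, 22, 1, 0, 2, 3, 25, 24, 5, 4, 6, 7, 27, 26,
     9, 8, 10, 11, 29, 28, 13, 12, 14, 15, 30, 16, 17, 18, 19, 20, 21, 22, 23, 1, 2, 0, 3, 24, 25]
  tail :=
    ![[4, 5, 7, 6, 26, 27, 9, 10, 8, 11, 28, 29, 12, 13, 15, 14],
      [5, 6, 4, 7, 26, 27, 9, 10, 8, 11, 28, 29, 12, 13, 15, 14],
      [4, 5, 7, 6, 26, 27, 9, 10, 8, 11, 28, 29, 13, 14, 12, 15],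
      [5, 6, 4, 7, 26, 27, 8, 9, 11, 10, 28, 29, 13, 14, 12, 15]]

/-- A coding of `w` over `32` letters by blocks of length `31 * 17`. -/
def code32 : BlockCode 32 where
  reps := 17
  base :=
    [16, 31, 18, 17, 20, 19, 21, 23, 22, 0, 24, 3, 1, 25, 2, 4, 26, 7, 5, 27, 6, 8, 28, 11, 9, 29,
     10, 12, 30, 15, 13, 16, 14, 18, 31, 20, 17, 19, 23, 21, 0, 22, 3, 24, 25, 1, 4, 2, 7, 26, 27,
     5, 8, 6, 11, 28, 29, 9, 12, 10, 15, 30, 16, 13, 18, 14, 20, 31, 17, 23, 19, 0, 21, 3, 22, 25,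
     24, 4, 1, 7, 2, 27, 26, 8, 5, 11, 6, 29, 28, 12, 9, 15, 10, 16, 30, 18, 13, 20, 14, 31, 23, 17,
     0, 19, 3, 21, 25, 22, 4, 24, 7, 1, 27, 2, 8, 26, 11, 5, 29, 6, 12, 28, 15, 9, 16, 10, 18, 30,
     20, 13, 14, 23, 31, 0, 17, 3, 19, 25, 21, 4, 22, 7, 24, 27, 1, 8, 2, 11, 26, 29, 5, 12, 6, 15,
     28, 16, 9, 18, 10, 20, 30, 13, 23, 14, 0, 31, 3, 17, 25, 19, 4, 21, 7, 22, 27, 24, 8, 1, 11, 2,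
     29, 26, 12, 5, 15, 6, 16, 28, 18, 9, 20, 10, 30, 23, 13, 0, 14, 3, 31, 25, 17, 4, 19, 7, 21,
     27, 22, 8, 24, 11, 1, 29, 2, 12, 26, 15, 5, 16, 6, 18, 28, 20, 9, 10, 23, 30, 0, 13, 3, 14, 25,
     31, 4, 17, 7, 19, 27, 21, 8, 22, 11, 24, 29, 1, 12, 2, 15, 26, 16, 5, 18, 6, 20, 28, 9, 23, 10,
     0, 30, 3, 13, 25, 14, 4, 31, 7, 17, 27, 19, 8, 21, 11, 22, 29, 24, 12, 1, 15, 2, 16, 26, 18, 5,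
     20, 6, 28, 23, 9, 0, 10, 3, 30, 25, 13, 4, 14, 7, 31, 27, 17, 8, 19, 11, 21, 29, 22, 12, 24,
     15, 1, 16, 2, 18, 26, 20, 5, 6, 23, 28, 0, 9, 3, 10, 25, 30, 4, 13, 7, 14, 27, 31, 8, 17, 11,
     19, 29, 21, 12, 22, 15, 24, 16, 1, 18, 2, 20, 26, 5, 23, 6, 0, 28, 3, 9, 25, 10, 4, 30, 7, 13,
     27, 14, 8, 31, 11, 17, 29, 19, 12, 21, 15, 22, 16, 24, 18, 1, 20, 2, 26, 23, 5, 0, 6, 3, 28,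
     25, 9, 4, 10, 7, 30, 27, 13, 8, 14, 11, 31, 29, 17, 12, 19, 15, 21, 16, 22, 18, 24, 20, 1, 2,
     23, 26, 0, 5, 3, 6, 25, 28, 4, 9, 7, 10, 27, 30, 8, 13, 11, 14, 29, 31, 12, 17, 15, 19, 16, 21,
     18, 22, 20, 24, 1, 23, 2, 0, 26, 3, 5, 25, 6, 4, 28, 7, 9, 27, 10, 8, 30, 11, 13, 29, 14, 12,
     31, 15, 17, 16, 19, 18, 21, 20, 22, 24, 23, 1, 0, 2, 3, 26, 25, 5, 4, 6, 7, 28, 27, 9, 8, 10,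
     11, 30, 29, 13, 12, 14, 15, 31, 16, 17, 18, 19, 20, 21, 22, 23, 24, 1, 2, 0, 3, 25, 26]
  tail :=
    ![[4, 5, 7, 6, 27, 28, 9, 10, 8, 11, 29, 30, 12, 13, 15, 14],
      [5, 6, 4, 7, 27, 28, 9, 10, 8, 11, 29, 30, 12, 13, 15, 14],
      [4, 5, 7, 6, 27, 28, 9, 10, 8, 11, 29, 30, 13, 14, 12, 15],
      [5, 6, 4, 7, 27, 28, 8, 9, 11, 10, 29, 30, 13, 14, 12, 15]]

theorem code30_isValid : code30.IsValid where
  sixteen_le := by decide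
  le_thirtyTwo := by decide
  le_reps := by decide
  length_base := by decide +kernel
  length_block := by decide +kernel
  lt_of_mem_block := by decide +kernel
  map_orbitRep_block := by decide +kernel
  hitsWindows_base := by decide +kernel
  hitsWindows_orbits := by decide +kernel
  hitsWindows_short := by decide +kernel
  hitsWindows_blocks := by decide +kernel

theorem code31_isValid : code31.IsValid where
  sixteen_le := by decide
  le_thirtyTwo := by decide
  le_reps := by decide
  length_base := by decide +kernel
  length_block := by decide +kernel
  lt_of_mem_block := by decide +kernel
  map_orbitRep_block := by decide +kernel
  hitsWindows_base := by decide +kernel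
  hitsWindows_orbits := by decide +kernel
  hitsWindows_short := by decide +kernel
  hitsWindows_blocks := by decide +kernel

theorem code32_isValid : code32.IsValid where
  sixteen_le := by decide
  le_thirtyTwo := by decide
  le_reps := by decide
  length_base := by decide +kernel
  length_block := by decide +kernel
  lt_of_mem_block := by decide +kernel
  map_orbitRep_block := by decide +kernel
  hitsWindows_base := by decide +kernel
  hitsWindows_orbits := by decide +kernel
  hitsWindows_short := by decide +kernel
  hitsWindows_blocks := by decide +kernel

/-- Dejean's conjecture for `n ∈ {30, 31, 32}`: there is an infinite word `x` over `n` letters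
such that every factor of `x` having period `q` has length at most `n·q/(n-1)`, i.e. `x`
contains no factor of exponent strictly greater than `n/(n-1)`. -/
theorem stmt3 (n : ℕ) (hn : n = 30 ∨ n = 31 ∨ n = 32) :
    ∃ x : ℕ → Fin n, ∀ (v : List (Fin n)) (q : ℕ),
      FactorOf v x → HasPeriod v q → (v.length : ℚ) ≤ (n : ℚ) * q / ((n : ℚ) - 1) := by
  obtain rfl | rfl | rfl := hn
  · exact code30_isValid.exists_word
  · exact code31_isValid.exists_word
  · exact code32_isValid.exists_word
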